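/- Fix a constant c₀ > 3. For each p, let n = n_p ≥ 1 be arbitrary and let X be an n×p random matrix with iid N(0, 1/n) entries. Let D(c₀) be the event that for every nonempty subset S ⊆ {1,…,p}, 1_Sᵀ X_Sᵀ X_S 1_S ≤ |S| · [ 1 + √(|S|/n) · (1 + √(2 c₀ log p)) ]², where X_S is the submatrix of columns indexed by S and 1_S is the all-ones vector of length |S|. Then P(D(c₀)ᶜ) = o(1/p²) as p → ∞; indeed P(D(c₀)ᶜ) ≤ 2 Σ_{k=1}^p exp( −(c₀ − 1) k log p ). -/

import Mathlib

open MeasureTheory ProbabilityTheory Filter Topology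

open scoped ENNReal NNReal

/-- The event `D(c₀)` of Lemma 5 of the paper: for every nonempty `S ⊆ {1,…,p}`,
`1_Sᵀ X_Sᵀ X_S 1_S ≤ |S| [1 + √(|S|/n) (1 + √(2 c₀ log p))]²`. -/
def eventD (c₀ : ℝ) (n p : ℕ) : Set (Fin n → Fin p → ℝ) :=
  {x | ∀ S : Finset (Fin p), S.Nonempty →
    ∑ i, (∑ j ∈ S, x i j) ^ 2 ≤
      (S.card : ℝ) *
        (1 + Real.sqrt ((S.card : ℝ) / (n : ℝ)) * (1 + Real.sqrt (2 * c₀ * Real.log p))) ^ 2}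

/-! For `r ≥ 0`, Chernoff's bound for a sum of `n` squared centered Gaussians of variance `v`,
with the parameter at which the moment generating function equals `(1 + r) ^ n ≤ exp (n * r)`,
shows that this sum reaches `n v (1 + r) ^ 2` with probability at most `exp (-n r ^ 2 / 2)`. The
row sums over a set `S` of `k` columns are independent `N(0, k / n)`, so the choice
`r = √(k / n) * (1 + √(2 c log p))` bounds the failure probability at `S` by `p ^ (-c k)`. There are
at most `p ^ k` such sets, and the resulting geometric series is of order `p ^ (1 - c)`, which is
`o(p ^ (-2))` for `c > 3`. -/

section GaussianSums

variable {Ω ι : Type*} {mΩ : MeasurableSpace Ω} {P : Measure Ω} {X : ι → Ω → ℝ}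

lemma hasLaw_sum_gaussianReal_of_iIndepFun {m : ι → ℝ} {v : ι → ℝ≥0}
    (hX : ∀ i, HasLaw (X i) (gaussianReal (m i) (v i)) P) (hind : iIndepFun X P) (s : Finset ι) :
    HasLaw (∑ i ∈ s, X i) (gaussianReal (∑ i ∈ s, m i) (∑ i ∈ s, v i)) P := by
  classical
  have := hind.isProbabilityMeasure
  induction s using Finset.induction_on with
  | empty =>
    have hzero : HasLaw (0 : Ω → ℝ) (Measure.dirac 0) P :=
      hasLaw_dirac_of_ae_eq (.of_forall fun _ => rfl)
    simpa using hzero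
  | insert i s hi ih =>
    simp only [Finset.sum_insert hi, ← gaussianReal_conv_gaussianReal]
    exact (hind.indepFun_finsetSum_of_notMem₀ (fun i => (hX i).aemeasurable) hi).symm.hasLaw_add
      (hX i) ih

/-- For `1 ≤ 2 * v * t` the integral defining the left side diverges, and both sides are `0` by
the conventions for divergent integrals, square roots of nonpositive numbers and `0⁻¹`. -/
lemma mgf_sq_gaussianReal (v : ℝ≥0) (t : ℝ) :
    mgf (fun y => y ^ 2) (gaussianReal 0 v) t = (√(1 - 2 * v * t))⁻¹ := by
  rcases eq_or_ne v 0 with rfl | hv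
  · simp [mgf]
  have : (0 : ℝ) < v := by positivity
  have density_mul_exp (y : ℝ) : gaussianPDFReal 0 v y • Real.exp (t * y ^ 2) =
      (√(2 * Real.pi * v))⁻¹ * Real.exp (-(1 / (2 * v) - t) * y ^ 2) := by
    rw [gaussianPDFReal, smul_eq_mul, mul_assoc, ← Real.exp_add]
    ring_nf
  simp only [mgf, integral_gaussianReal_eq_integral_smul hv, density_mul_exp]
  rw [integral_const_mul, integral_gaussian, ← Real.sqrt_inv, ← Real.sqrt_inv,
    ← Real.sqrt_mul (by positivity)]
  congr 1
  rw [← inv_div, ← mul_inv]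
  congr 1
  field_simp

lemma mgf_sum_sq_of_iIndepFun_gaussianReal {v : ℝ≥0} (hX : ∀ i, HasLaw (X i) (gaussianReal 0 v) P)
    (hind : iIndepFun X P) (s : Finset ι) (t : ℝ) :
    mgf (∑ i ∈ s, fun ω => X i ω ^ 2) P t = (√(1 - 2 * v * t))⁻¹ ^ s.card := by
  have mgf_sq (i : ι) : mgf (fun ω => X i ω ^ 2) P t = (√(1 - 2 * v * t))⁻¹ := by
    rw [← mgf_sq_gaussianReal, ← (hX i).map_eq, mgf_map (hX i).aemeasurable (by fun_prop)]
    rfl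
  have hind_sq : iIndepFun (fun i ω => X i ω ^ 2) P :=
    hind.comp (fun _ y => y ^ 2) fun _ => by fun_prop
  rw [hind_sq.mgf_sum₀ fun i => (hX i).aemeasurable.pow_const 2]
  simp only [mgf_sq, Finset.prod_const]

lemma measureReal_sum_sq_ge_le_of_iIndepFun_gaussianReal {v : ℝ≥0} (hv : v ≠ 0)
    (hX : ∀ i, HasLaw (X i) (gaussianReal 0 v) P) (hind : iIndepFun X P) (s : Finset ι)
    {r : ℝ} (hr : 0 ≤ r) :
    P.real {ω | s.card * v * (1 + r) ^ 2 ≤ ∑ i ∈ s, X i ω ^ 2} ≤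
      Real.exp (-(s.card * r ^ 2 / 2)) := by
  have := hind.isProbabilityMeasure
  have : (0 : ℝ) < v := by positivity
  -- This choice makes each factor `(1 - 2 * v * t) ^ (-1 / 2)` of the mgf equal to `1 + r`.
  set t : ℝ := (1 - ((1 + r) ^ 2)⁻¹) / (2 * v) with ht
  have ht_nonneg : 0 ≤ t :=
    div_nonneg (sub_nonneg.2 (inv_le_one_of_one_le₀ (one_le_pow₀ (by linarith)))) (by positivity)
  have one_sub_eq : 1 - 2 * v * t = ((1 + r) ^ 2)⁻¹ := by
    rw [ht]; field_simp; ring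
  have mgf_eq : mgf (∑ i ∈ s, fun ω => X i ω ^ 2) P t = (1 + r) ^ s.card := by
    rw [mgf_sum_sq_of_iIndepFun_gaussianReal hX hind, one_sub_eq, Real.sqrt_inv,
      Real.sqrt_sq (by positivity), inv_inv]
  have hint : Integrable (fun ω => Real.exp (t * (∑ i ∈ s, fun ω => X i ω ^ 2) ω)) P :=
    .of_integral_ne_zero (mgf_eq.trans_ne (by positivity))
  calc P.real {ω | s.card * v * (1 + r) ^ 2 ≤ ∑ i ∈ s, X i ω ^ 2}
      ≤ Real.exp (-t * (s.card * v * (1 + r) ^ 2)) * (1 + r) ^ s.card := by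
        simpa only [mgf_eq, Finset.sum_apply] using
          measure_ge_le_exp_mul_mgf (s.card * v * (1 + r) ^ 2) ht_nonneg hint
    _ ≤ Real.exp (-t * (s.card * v * (1 + r) ^ 2)) * Real.exp r ^ s.card := by
        gcongr
        linarith [Real.add_one_le_exp r]
    _ = Real.exp (-(s.card * r ^ 2 / 2)) := by
        rw [← Real.exp_nat_mul, ← Real.exp_add, ht]
        congr 1
        field_simp
        ring

end GaussianSums

section GaussianMatrix

variable {ι κ : Type*} [Fintype ι] [Fintype κ]

/-- The law of a matrix with rows indexed by `ι`, columns indexed by `κ`, and independent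
`N(0, v)` entries, encoded as a product over the rows so that rows are independent by
construction. -/
noncomputable abbrev gaussianMatrix (ι κ : Type*) [Fintype ι] [Fintype κ] (v : ℝ≥0) :
    Measure (ι → κ → ℝ) :=
  Measure.pi fun _ => Measure.pi fun _ => gaussianReal 0 v

lemma hasLaw_sum_coord_pi_gaussianReal (v : ℝ≥0) (S : Finset κ) :
    HasLaw (fun x : κ → ℝ => ∑ j ∈ S, x j) (gaussianReal 0 (S.card * v))
      (Measure.pi fun _ => gaussianReal 0 v) := by
  have hcoord (j : κ) : HasLaw (fun x : κ → ℝ => x j) (gaussianReal 0 v)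
      (Measure.pi fun _ => gaussianReal 0 v) :=
    (measurePreserving_eval (fun _ => gaussianReal 0 v) j).hasLaw
  have hind := iIndepFun_pi (μ := fun _ : κ => gaussianReal 0 v) (X := fun _ y => y)
    fun _ => aemeasurable_id
  simpa [Finset.sum_fn] using hasLaw_sum_gaussianReal_of_iIndepFun hcoord hind S

lemma gaussianMatrix_real_sum_sq_rowSum_ge_le {v : ℝ≥0} (hv : v ≠ 0) {S : Finset κ}
    (hS : S.Nonempty) {r : ℝ} (hr : 0 ≤ r) :
    (gaussianMatrix ι κ v).real
        {x | Fintype.card ι * (S.card * v) * (1 + r) ^ 2 ≤ ∑ i, (∑ j ∈ S, x i j) ^ 2} ≤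
      Real.exp (-(Fintype.card ι * r ^ 2 / 2)) := by
  have hrow := hasLaw_sum_coord_pi_gaussianReal v S
  have hlaw (i : ι) : HasLaw (fun x : ι → κ → ℝ => ∑ j ∈ S, x i j) (gaussianReal 0 (S.card * v))
      (gaussianMatrix ι κ v) :=
    hrow.comp (measurePreserving_eval (fun _ => Measure.pi fun _ => gaussianReal 0 v) i).hasLaw
  have hind : iIndepFun (fun (i : ι) (x : ι → κ → ℝ) => ∑ j ∈ S, x i j) (gaussianMatrix ι κ v) :=
    iIndepFun_pi fun _ => hrow.aemeasurable
  have hvar : (S.card : ℝ≥0) * v ≠ 0 := mul_ne_zero (mod_cast hS.card_ne_zero) hv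
  exact_mod_cast measureReal_sum_sq_ge_le_of_iIndepFun_gaussianReal hvar hlaw hind Finset.univ hr

end GaussianMatrix

lemma sum_nonempty_apply_card {κ M : Type*} [Fintype κ] [AddCommMonoid M] (f : ℕ → M) :
    ∑ S : Finset κ with S.Nonempty, f S.card =
      ∑ k ∈ Finset.Icc 1 (Fintype.card κ), (Fintype.card κ).choose k • f k := by
  classical
  have hcard : ∀ S ∈ ({S : Finset κ | S.Nonempty} : Finset _),
      S.card ∈ Finset.Icc 1 (Fintype.card κ) := fun S hS =>
    Finset.mem_Icc.2 ⟨(Finset.mem_filter_univ S).1 hS |>.card_pos, S.card_le_univ⟩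
  rw [← Finset.sum_fiberwise_of_maps_to hcard]
  refine Finset.sum_congr rfl fun k hk => ?_
  have hfiber : ({S : Finset κ | S.Nonempty} : Finset _).filter (fun S => S.card = k) =
      Finset.univ.powersetCard k := by
    ext S
    simp only [Finset.mem_filter, Finset.mem_univ, true_and, Finset.mem_powersetCard,
      Finset.subset_univ, and_iff_right_iff_imp]
    rintro rfl
    exact Finset.card_pos.1 (Finset.mem_Icc.1 hk).1
  rw [hfiber, Finset.sum_powersetCard, Finset.card_univ]

lemma measureReal_biUnion_nonempty_finset_le {Ω κ : Type*} [MeasurableSpace Ω] [Fintype κ]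
    {μ : Measure Ω} {A : Finset κ → Set Ω} {f : ℕ → ℝ}
    (hA : ∀ S : Finset κ, S.Nonempty → μ.real (A S) ≤ f S.card) :
    μ.real (⋃ S ∈ ({S : Finset κ | S.Nonempty} : Finset _), A S) ≤
      ∑ k ∈ Finset.Icc 1 (Fintype.card κ), (Fintype.card κ).choose k * f k := by
  simp only [← nsmul_eq_mul, ← sum_nonempty_apply_card]
  exact (measureReal_biUnion_finset_le _ _).trans
    (Finset.sum_le_sum fun S hS => hA S ((Finset.mem_filter_univ S).1 hS))

/-- The event that the inequality in `eventD` fails for the column set `S`. -/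
def failureAt (c : ℝ) (n : ℕ) {p : ℕ} (S : Finset (Fin p)) : Set (Fin n → Fin p → ℝ) :=
  {x | S.card * (1 + √(S.card / n) * (1 + √(2 * c * Real.log p))) ^ 2 <
    ∑ i, (∑ j ∈ S, x i j) ^ 2}

lemma compl_eventD_eq_biUnion_failureAt (c : ℝ) (n p : ℕ) :
    (eventD c n p)ᶜ = ⋃ S ∈ ({S : Finset (Fin p) | S.Nonempty} : Finset _), failureAt c n S := by
  ext x
  simp [eventD, failureAt]

lemma gaussianMatrix_real_failureAt_le (c : ℝ) {n p : ℕ} (hn : 0 < n) {S : Finset (Fin p)}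
    (hS : S.Nonempty) :
    (gaussianMatrix (Fin n) (Fin p) (n : ℝ≥0)⁻¹).real (failureAt c n S) ≤
      Real.exp (-(c * S.card * Real.log p)) := by
  have : (0 : ℝ) < n := mod_cast hn
  set q := √(2 * c * Real.log p)
  have hq : 2 * c * Real.log p ≤ (1 + q) ^ 2 :=
    (Real.sqrt_le_left (by positivity)).1 (le_add_of_nonneg_left zero_le_one)
  have hvar : (n : ℝ) * (S.card * ((n : ℝ≥0)⁻¹ : ℝ≥0)) = S.card := by
    push_cast; field_simp
  have htail := gaussianMatrix_real_sum_sq_rowSum_ge_le (ι := Fin n) (v := (n : ℝ≥0)⁻¹)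
    (by positivity) hS (r := √(S.card / n) * (1 + q)) (by positivity)
  rw [Fintype.card_fin, hvar] at htail
  have hsub : failureAt c n S ⊆
      {x | S.card * (1 + √(S.card / n) * (1 + q)) ^ 2 ≤ ∑ i, (∑ j ∈ S, x i j) ^ 2} :=
    Set.ofPred_subset_ofPred.2 fun _ => le_of_lt
  refine (measureReal_mono hsub).trans (htail.trans (Real.exp_le_exp.2 (neg_le_neg ?_)))
  calc c * S.card * Real.log p = S.card * (2 * c * Real.log p) / 2 := by ring
    _ ≤ S.card * (1 + q) ^ 2 / 2 := by gcongr
    _ = n * (√(S.card / n) * (1 + q)) ^ 2 / 2 := by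
      rw [mul_pow, Real.sq_sqrt (by positivity)]; field_simp

lemma choose_mul_exp_neg_mul_log_le (c : ℝ) {p : ℕ} (hp : 0 < p) (k : ℕ) :
    p.choose k * Real.exp (-(c * k * Real.log p)) ≤ Real.exp (-(c - 1) * k * Real.log p) := by
  have hchoose : (p.choose k : ℝ) ≤ Real.exp (k * Real.log p) := by
    rw [Real.exp_nat_mul, Real.exp_log (mod_cast hp)]
    exact_mod_cast Nat.choose_le_pow p k
  calc p.choose k * Real.exp (-(c * k * Real.log p))
      ≤ Real.exp (k * Real.log p) * Real.exp (-(c * k * Real.log p)) := by gcongr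
    _ = Real.exp (-(c - 1) * k * Real.log p) := by rw [← Real.exp_add]; ring_nf

lemma gaussianMatrix_real_compl_eventD_le (c : ℝ) {n : ℕ} (hn : 0 < n) (p : ℕ) :
    (gaussianMatrix (Fin n) (Fin p) (n : ℝ≥0)⁻¹).real (eventD c n p)ᶜ ≤
      ∑ k ∈ Finset.Icc 1 p, Real.exp (-(c - 1) * k * Real.log p) := by
  have hunion := measureReal_biUnion_nonempty_finset_le
    (f := fun k => Real.exp (-(c * k * Real.log p)))
    fun _ hS => gaussianMatrix_real_failureAt_le c hn hS
  rw [Fintype.card_fin] at hunion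
  rw [compl_eventD_eq_biUnion_failureAt]
  refine hunion.trans (Finset.sum_le_sum fun k hk => choose_mul_exp_neg_mul_log_le c ?_ k)
  exact zero_lt_one.trans_le ((Finset.mem_Icc.1 hk).1.trans (Finset.mem_Icc.1 hk).2)

lemma sum_exp_neg_mul_log_le {a x : ℝ} (ha : 0 < a) (hx : 1 < x) (m : ℕ) :
    ∑ k ∈ Finset.Icc 1 m, Real.exp (-a * k * Real.log x) ≤ x ^ (-a) / (1 - x ^ (-a)) := by
  have hx_pos : 0 < x := zero_lt_one.trans hx
  have hterm (k : ℕ) : Real.exp (-a * k * Real.log x) = (x ^ (-a)) ^ k := by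
    rw [Real.rpow_def_of_pos hx_pos, ← Real.exp_nat_mul]
    ring_nf
  simp only [hterm, ← Finset.Ico_add_one_right_eq_Icc]
  simpa only [pow_one] using geom_sum_Ico_le_of_lt_one (m := 1) (n := m + 1)
    (Real.rpow_nonneg hx_pos.le _) (Real.rpow_lt_one_of_one_lt_of_neg hx (neg_lt_zero.2 ha))

lemma tendsto_pow_mul_sum_exp_neg_mul_log {a : ℝ} {m : ℕ} (hm : m < a) :
    Tendsto (fun p : ℕ =>
      (p : ℝ) ^ m * ∑ k ∈ Finset.Icc 1 p, Real.exp (-a * k * Real.log p)) atTop (𝓝 0) := by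
  have ha : 0 < a := (Nat.cast_nonneg m).trans_lt hm
  have hdecay {b : ℝ} (hb : 0 < b) : Tendsto (fun p : ℕ => (p : ℝ) ^ (-b)) atTop (𝓝 0) :=
    (tendsto_rpow_neg_atTop hb).comp tendsto_natCast_atTop_atTop
  have hbound : Tendsto (fun p : ℕ => (p : ℝ) ^ (-(a - m)) / (1 - (p : ℝ) ^ (-a))) atTop (𝓝 0) := by
    simpa [Pi.div_def] using (hdecay (sub_pos.2 hm)).div ((hdecay ha).const_sub 1) (by simp)
  refine squeeze_zero' (.of_forall fun p => by positivity) ?_ hbound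
  filter_upwards [eventually_gt_atTop 1] with p hp
  have hp_pos : (0 : ℝ) < p := mod_cast zero_lt_one.trans hp
  calc (p : ℝ) ^ m * ∑ k ∈ Finset.Icc 1 p, Real.exp (-a * k * Real.log p)
      ≤ (p : ℝ) ^ m * ((p : ℝ) ^ (-a) / (1 - (p : ℝ) ^ (-a))) := by
        gcongr
        exact sum_exp_neg_mul_log_le ha (mod_cast hp) p
    _ = (p : ℝ) ^ (-(a - m)) / (1 - (p : ℝ) ^ (-a)) := by
        rw [← mul_div_assoc, ← Real.rpow_natCast, ← Real.rpow_add hp_pos]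
        ring_nf

/-- Lemma 5 of the paper. Fix `c₀ > 3`. For each `p`, let `n = n_p ≥ 1`
and let `X` be an `n × p` matrix with iid `N(0, 1/n)` entries. Then
`P(D(c₀)ᶜ) ≤ 2 Σ_{k=1}^p exp(−(c₀−1) k log p)`, and `P(D(c₀)ᶜ) = o(1/p²)` as `p → ∞`. -/
theorem stmt_12 (c₀ : ℝ) (hc₀ : 3 < c₀) (n : ℕ → ℕ) (hn : ∀ p, 1 ≤ n p) :
    (∀ p : ℕ,
      (Measure.pi fun _ : Fin (n p) =>
          Measure.pi fun _ : Fin p => gaussianReal 0 ((n p : ℝ≥0))⁻¹)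
        (eventD c₀ (n p) p)ᶜ
        ≤ ENNReal.ofReal
            (2 * ∑ k ∈ Finset.Icc 1 p, Real.exp (-(c₀ - 1) * (k : ℝ) * Real.log p))) ∧
    Tendsto
      (fun p : ℕ => (p : ℝ≥0∞) ^ 2 *
        (Measure.pi fun _ : Fin (n p) =>
            Measure.pi fun _ : Fin p => gaussianReal 0 ((n p : ℝ≥0))⁻¹)
          (eventD c₀ (n p) p)ᶜ)
      atTop (𝓝 0) := by
  have hbound (p : ℕ) :
      gaussianMatrix (Fin (n p)) (Fin p) (n p : ℝ≥0)⁻¹ (eventD c₀ (n p) p)ᶜ ≤ ENNReal.ofReal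
        (∑ k ∈ Finset.Icc 1 p, Real.exp (-(c₀ - 1) * (k : ℝ) * Real.log p)) :=
    (ofReal_measureReal (measure_ne_top _ _)).symm.trans_le
      (ENNReal.ofReal_le_ofReal (gaussianMatrix_real_compl_eventD_le c₀ (hn p) p))
  refine ⟨fun p => (hbound p).trans (ENNReal.ofReal_le_ofReal ?_), ?_⟩
  · exact le_mul_of_one_le_left (by positivity) one_le_two
  · have hlim := ENNReal.tendsto_ofReal (tendsto_pow_mul_sum_exp_neg_mul_log
      (a := c₀ - 1) (m := 2) (by norm_num; linarith))
    rw [ENNReal.ofReal_zero] at hlim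
    refine tendsto_of_tendsto_of_tendsto_of_le_of_le tendsto_const_nhds hlim
      (fun _ => zero_le) fun p => ?_
    rw [ENNReal.ofReal_mul (by positivity), ENNReal.ofReal_pow (by positivity),
      ENNReal.ofReal_natCast]
    gcongr
    exact hbound p
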